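/- arXiv:2311.05185 — 4 statements merged into one kernel-verified Lean document; each statement's English description precedes it below -/
import Mathlib

section
/- Let n ≥ 2, let S⁺ be the set of vectors in the standard (n−1)-simplex of ℝⁿ with all coordinates strictly positive, let u = (1/n, …, 1/n), and let α ∈ S⁺ with α ≠ u. Let D : S⁺ → ℝ be continuous and quasiconvex with D(u) = 0 and D(p) > 0 for p ≠ u; let G : ℝ → ℝ be monotonically non-decreasing with G(0) = 0 and 0 < G(x) ≤ 1 for x > 0; set C = G ∘ D. Let μ ∈ ℝ and define f(p) = C(p)·(L_α(p) − μ) where L_α(p) = −Σ_j α_j log p_j. If Δ(α) = −Σ_j α_j log α_j > μ, then f(u) = 0, f(p) > 0 for every p ∈ S⁺ with p ≠ u, and hence u is the unique global minimizer of f over S⁺ with C(u) = 0. -/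
/-!
By Gibbs' inequality, `L_α(p) ≥ L_α(α) = Δ(α)` for every strictly positive `p` in the simplex, so
the loss gap `L_α(p) - μ` is at least `Δ(α) - μ > 0`. For `p ≠ u` the confidence `G (D p)` is
positive too, hence `f p > 0`, while `f u = 0` because `G (D u) = G 0 = 0`.
-/

open Finset

/-- The strictly positive part of the standard simplex. -/
def posSimplex (n : ℕ) : Set (Fin n → ℝ) :=
  {p | p ∈ stdSimplex ℝ (Fin n) ∧ ∀ i, 0 < p i}

/-- Gibbs' inequality: the cross-entropy of `p` under `α` is minimal at `p = α`. -/
lemma sum_mul_log_le_sum_mul_log_self {n : ℕ} {α p : Fin n → ℝ}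
    (hα : α ∈ posSimplex n) (hp : p ∈ posSimplex n) :
    ∑ j, α j * Real.log (p j) ≤ ∑ j, α j * Real.log (α j) := by
  -- `log x ≤ x - 1` at `x = p j / α j`; summing over `j`, the error `∑ (p j - α j)` vanishes.
  have key : ∀ j, α j * Real.log (p j) ≤ α j * Real.log (α j) + (p j - α j) := fun j => by
    have ha := hα.2 j
    have hlog := Real.log_le_sub_one_of_pos (div_pos (hp.2 j) ha)
    rw [Real.log_div (hp.2 j).ne' ha.ne'] at hlog
    have hmul := mul_le_mul_of_nonneg_left hlog ha.le
    have hdiv : α j * (p j / α j - 1) = p j - α j := by field_simp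
    linarith
  calc ∑ j, α j * Real.log (p j)
      ≤ ∑ j, (α j * Real.log (α j) + (p j - α j)) := sum_le_sum fun j _ => key j
    _ = ∑ j, α j * Real.log (α j) := by
        rw [sum_add_distrib, sum_sub_distrib, hp.1.2, hα.1.2, sub_self, add_zero]

/-- First case of the paper's Theorem 2.4: if the best possible MLP loss `Δ(α)`
exceeds the GNN loss `μ`, then the uniform vector is the unique global minimizer
of the confidence-weighted objective, with zero confidence. -/
theorem mowst_case_gnn_dominates (n : ℕ) (hn : 2 ≤ n)
    (u : Fin n → ℝ) (hu : u = fun _ => (1 : ℝ) / n)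
    (α : Fin n → ℝ) (hα : α ∈ posSimplex n) (hαu : α ≠ u)
    (D : (Fin n → ℝ) → ℝ) (G : ℝ → ℝ)
    (hDcont : ContinuousOn D (posSimplex n))
    (hDqc : ∀ p ∈ posSimplex n, ∀ q ∈ posSimplex n, ∀ l ∈ Set.Icc (0 : ℝ) 1,
      D (l • p + (1 - l) • q) ≤ max (D p) (D q))
    (hDu : D u = 0)
    (hDpos : ∀ p ∈ posSimplex n, p ≠ u → 0 < D p)
    (hG : Monotone G) (hG0 : G 0 = 0)
    (hGpos : ∀ x : ℝ, 0 < x → 0 < G x ∧ G x ≤ 1)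
    (μ : ℝ) (hμ : μ < -∑ j, α j * Real.log (α j))
    (f : (Fin n → ℝ) → ℝ)
    (hf : ∀ p, f p = G (D p) * ((-∑ j, α j * Real.log (p j)) - μ)) :
    f u = 0 ∧ (∀ p ∈ posSimplex n, p ≠ u → 0 < f p) ∧ G (D u) = 0 := by
  have hGu : G (D u) = 0 := by rw [hDu, hG0]
  refine ⟨by rw [hf, hGu, zero_mul], fun p hp hpu => ?_, hGu⟩
  rw [hf]
  have hgibbs := sum_mul_log_le_sum_mul_log_self hα hp
  exact mul_pos (hGpos _ (hDpos p hp hpu)).1 (by linarith)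
end

section
/- Let n ≥ 2, let S⁺ be the set of vectors in the standard (n−1)-simplex of ℝⁿ with all coordinates strictly positive, let u = (1/n, …, 1/n), and let α ∈ S⁺ with α ≠ u. Let D : S⁺ → ℝ be continuous and quasiconvex with D(u) = 0 and D(p) > 0 for p ≠ u; let G : ℝ → ℝ be monotonically non-decreasing with G(0) = 0 and 0 < G(x) ≤ 1 for x > 0; set C = G ∘ D. Let μ ∈ ℝ and define f(p) = C(p)·(L_α(p) − μ) where L_α(p) = −Σ_j α_j log p_j. If Δ(α) = −Σ_j α_j log α_j = μ, then f(u) = f(α) = 0 and f(p) > 0 for every p ∈ S⁺ with p ∉ {u, α}; hence the set of global minimizers of f over S⁺ is exactly {u, α}. -/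
/-! The loss gap `L_α(p) - L_α(α)` is a Kullback–Leibler divergence, so it is positive for `p ≠ α`
(Gibbs' inequality, `log_sum_lt_of_ne`, a consequence of `log t < t - 1` for `t ≠ 1`). The confidence
factor `G (D p)` vanishes at `u` and is positive at every other point of the open simplex. Hence the
product vanishes exactly at `u` and `α` and is positive elsewhere, which identifies the minimizers. -/

open Finset

/-- Strict Gibbs inequality on the open simplex. -/
theorem log_sum_lt_of_ne {n : ℕ} {α p : Fin n → ℝ} (hα : α ∈ posSimplex n)
    (hp : p ∈ posSimplex n) (hne : p ≠ α) :
    ∑ j, α j * Real.log (p j) < ∑ j, α j * Real.log (α j) := by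
  obtain ⟨⟨-, hαs⟩, hα0⟩ := hα
  obtain ⟨⟨-, hps⟩, hp0⟩ := hp
  have hsplit : ∀ j, Real.log (p j / α j) = Real.log (p j) - Real.log (α j) := fun j =>
    Real.log_div (hp0 j).ne' (hα0 j).ne'
  have hcancel : ∀ j, α j * (p j / α j - 1) = p j - α j := fun j => by
    have := (hα0 j).ne'
    field_simp
  -- Termwise, `α j * log (p j / α j) ≤ p j - α j`, strictly where the coordinates differ.
  have hlt : ∑ j, α j * (Real.log (p j) - Real.log (α j)) < ∑ j, (p j - α j) := by
    apply Finset.sum_lt_sum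
    · intro j _
      rw [← hsplit, ← hcancel]
      exact mul_le_mul_of_nonneg_left
        (Real.log_le_sub_one_of_pos (div_pos (hp0 j) (hα0 j))) (hα0 j).le
    · obtain ⟨j, hj⟩ := Function.ne_iff.mp hne
      refine ⟨j, Finset.mem_univ j, ?_⟩
      rw [← hsplit, ← hcancel]
      refine mul_lt_mul_of_pos_left
        (Real.log_lt_sub_one_of_pos (div_pos (hp0 j) (hα0 j)) ?_) (hα0 j)
      rwa [Ne, div_eq_one_iff_eq (hα0 j).ne']
  simp only [mul_sub, Finset.sum_sub_distrib] at hlt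
  linarith

/-- Second case of the paper's Theorem 2.4: if `Δ(α) = μ`, the set of global
minimizers of the confidence-weighted objective is exactly `{u, α}`. -/
theorem mowst_case_tie (n : ℕ) (hn : 2 ≤ n)
    (u : Fin n → ℝ) (hu : u = fun _ => (1 : ℝ) / n)
    (α : Fin n → ℝ) (hα : α ∈ posSimplex n) (hαu : α ≠ u)
    (D : (Fin n → ℝ) → ℝ) (G : ℝ → ℝ)
    (hDcont : ContinuousOn D (posSimplex n))
    (hDqc : ∀ p ∈ posSimplex n, ∀ q ∈ posSimplex n, ∀ l ∈ Set.Icc (0 : ℝ) 1,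
      D (l • p + (1 - l) • q) ≤ max (D p) (D q))
    (hDu : D u = 0)
    (hDpos : ∀ p ∈ posSimplex n, p ≠ u → 0 < D p)
    (hG : Monotone G) (hG0 : G 0 = 0)
    (hGpos : ∀ x : ℝ, 0 < x → 0 < G x ∧ G x ≤ 1)
    (μ : ℝ) (hμ : (-∑ j, α j * Real.log (α j)) = μ)
    (f : (Fin n → ℝ) → ℝ)
    (hf : ∀ p, f p = G (D p) * ((-∑ j, α j * Real.log (p j)) - μ)) :
    f u = 0 ∧ f α = 0 ∧
    (∀ p ∈ posSimplex n, p ≠ u → p ≠ α → 0 < f p) ∧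
    {p ∈ posSimplex n | ∀ q ∈ posSimplex n, f p ≤ f q} = {u, α} := by
  have hu_mem : u ∈ posSimplex n := by
    have hn0 : (0 : ℝ) < n := by exact_mod_cast (by omega : 0 < n)
    subst hu
    refine ⟨⟨fun _ => by positivity, ?_⟩, fun _ => by positivity⟩
    simp [hn0.ne']
  have hfu : f u = 0 := by rw [hf, hDu, hG0, zero_mul]
  have hfα : f α = 0 := by rw [hf, hμ, sub_self, mul_zero]
  have hpos : ∀ p ∈ posSimplex n, p ≠ u → p ≠ α → 0 < f p := by
    intro p hp hpu hpα
    rw [hf]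
    refine mul_pos (hGpos _ (hDpos p hp hpu)).1 ?_
    have := log_sum_lt_of_ne hα hp hpα
    linarith
  have hnonneg : ∀ q ∈ posSimplex n, 0 ≤ f q := by
    intro q hq
    by_cases hqu : q = u
    · rw [hqu, hfu]
    by_cases hqα : q = α
    · rw [hqα, hfα]
    exact (hpos q hq hqu hqα).le
  refine ⟨hfu, hfα, hpos, Set.Subset.antisymm ?_ ?_⟩
  · rintro p ⟨hp, hmin⟩
    by_contra hmem
    have hout : p ≠ u ∧ p ≠ α := by simpa using hmem
    have hle := hmin u hu_mem
    have hlt := hpos p hp hout.1 hout.2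
    linarith
  · rintro p (rfl | rfl)
    · exact ⟨hu_mem, fun q hq => hfu.trans_le (hnonneg q hq)⟩
    · exact ⟨hα, fun q hq => hfα.trans_le (hnonneg q hq)⟩
end

section
/- Let n ≥ 2, let S⁺ be the set of vectors in the standard (n−1)-simplex of ℝⁿ with all coordinates strictly positive, let u = (1/n, …, 1/n), and let α ∈ S⁺ with α ≠ u. Let D : S⁺ → ℝ be continuous and quasiconvex with D(u) = 0 and D(p) > 0 for p ≠ u; let G : ℝ → ℝ be monotonically non-decreasing with G(0) = 0 and 0 < G(x) ≤ 1 for x > 0; set C = G ∘ D. Let μ ∈ ℝ with Δ(α) = −Σ_j α_j log α_j < μ, and define f(p) = C(p)·(L_α(p) − μ) where L_α(p) = −Σ_j α_j log p_j. If p* ∈ S⁺ is a global minimizer of f over S⁺, then C(p*) ≥ C(α). -/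
/-!
The prediction `α` itself minimizes the loss `L_α` (Gibbs' inequality), and its excess loss
`Δ(α) - μ` is negative. If `p*` had smaller confidence than `α`, then, its loss being at least
`Δ(α)`, weighting by the nonnegative number `C(p*) < C(α)` would give `f(p*) > f(α)`.
-/

open Finset

/-- Gibbs' inequality: the cross-entropy with label distribution `a` is smallest at `a`. -/
lemma entropy_le_crossEntropy {n : ℕ} {a p : Fin n → ℝ}
    (ha : a ∈ posSimplex n) (hp : p ∈ posSimplex n) :
    (-∑ j, a j * Real.log (a j)) ≤ -∑ j, a j * Real.log (p j) := by
  have key : ∀ j, a j * Real.log (p j) - a j * Real.log (a j) ≤ p j - a j := fun j => by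
    have haj := ha.2 j
    have h := Real.log_le_sub_one_of_pos (div_pos (hp.2 j) haj)
    rw [Real.log_div (hp.2 j).ne' haj.ne'] at h
    have h2 := mul_le_mul_of_nonneg_left h haj.le
    have h3 : a j * (p j / a j - 1) = p j - a j := by field_simp
    rw [h3] at h2
    linarith
  have hsum := Finset.sum_le_sum fun j (_ : j ∈ Finset.univ) => key j
  rw [Finset.sum_sub_distrib, Finset.sum_sub_distrib, hp.1.2, ha.1.2] at hsum
  linarith

/-- Third case of the paper's Theorem 2.4 (lower confidence bound): when
`Δ(α) < μ`, any global minimizer `p*` satisfies `C(p*) ≥ C(α)`. -/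
theorem mowst_case_mlp_wins_conf_lower (n : ℕ) (hn : 2 ≤ n)
    (u : Fin n → ℝ) (hu : u = fun _ => (1 : ℝ) / n)
    (α : Fin n → ℝ) (hα : α ∈ posSimplex n) (hαu : α ≠ u)
    (D : (Fin n → ℝ) → ℝ) (G : ℝ → ℝ)
    (hDcont : ContinuousOn D (posSimplex n))
    (hDqc : ∀ p ∈ posSimplex n, ∀ q ∈ posSimplex n, ∀ l ∈ Set.Icc (0 : ℝ) 1,
      D (l • p + (1 - l) • q) ≤ max (D p) (D q))
    (hDu : D u = 0)
    (hDpos : ∀ p ∈ posSimplex n, p ≠ u → 0 < D p)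
    (hG : Monotone G) (hG0 : G 0 = 0)
    (hGpos : ∀ x : ℝ, 0 < x → 0 < G x ∧ G x ≤ 1)
    (μ : ℝ) (hμ : (-∑ j, α j * Real.log (α j)) < μ)
    (f : (Fin n → ℝ) → ℝ)
    (hf : ∀ p, f p = G (D p) * ((-∑ j, α j * Real.log (p j)) - μ))
    (pstar : Fin n → ℝ) (hpstar : pstar ∈ posSimplex n)
    (hmin : ∀ q ∈ posSimplex n, f pstar ≤ f q) :
    G (D α) ≤ G (D pstar) := by
  have hC : 0 ≤ G (D pstar) := by
    by_cases h : pstar = u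
    · rw [h, hDu, hG0]
    · exact (hGpos _ (hDpos _ hpstar h)).1.le
  have hgibbs := entropy_le_crossEntropy hα hpstar
  have h := hmin α hα
  rw [hf, hf] at h
  by_contra! hlt
  -- `C(p*) (L(p*) - μ) ≥ C(p*) (Δ(α) - μ) > C(α) (Δ(α) - μ)`, against minimality.
  have h1 := mul_le_mul_of_nonneg_left (sub_le_sub_right hgibbs μ) hC
  have h2 := mul_lt_mul_of_neg_right hlt (sub_neg.mpr hμ)
  linarith
end

section
/- Let n ≥ 2, let S⁺ be the set of vectors in the standard (n−1)-simplex of ℝⁿ with all coordinates strictly positive, let u = (1/n, …, 1/n), and let α ∈ S⁺ with α ≠ u. Let D : S⁺ → ℝ be continuous and quasiconvex with D(u) = 0 and D(p) > 0 for p ≠ u; let G : ℝ → ℝ be monotonically non-decreasing with G(0) = 0 and 0 < G(x) ≤ 1 for x > 0; set C = G ∘ D. Let μ ∈ ℝ with Δ(α) = −Σ_j α_j log α_j < μ, and define f(p) = C(p)·(L_α(p) − μ) where L_α(p) = −Σ_j α_j log p_j. If p* ∈ S⁺ is a global minimizer of f over S⁺, then C(p*) ≤ G(M) where M = sup{D(p)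 : p ∈ S⁺, L_α(p) = μ}. -/
/-!
Comparing `f pstar` with `f α < 0` shows that `L_α(pstar) < μ`. The loss blows up at the boundary
of the simplex because every `α i` is positive, so a line through `pstar` meets the level set
`{L_α = μ}` on both sides of `pstar` (`exists_level_on_segment`). Quasiconvexity then bounds
`D pstar` by the larger of two values of `D` on the level set. Those values are bounded above
because the level set lies in a compact subset of the open simplex (`bddAbove_image_level`), so
both are at most the supremum, and `G` is monotone.
-/

open Finset

/-- Every summand of the cross-entropy is nonnegative on the simplex, so a single one is a lower
bound. -/
lemma single_le_loss {n : ℕ} {α p : Fin n → ℝ} (hα : ∀ i, 0 < α i) (hp : p ∈ posSimplex n)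
    (i : Fin n) : -(α i * Real.log (p i)) ≤ -∑ j, α j * Real.log (p j) := by
  rw [← Finset.sum_neg_distrib]
  refine Finset.single_le_sum (f := fun j => -(α j * Real.log (p j))) (fun j _ => ?_)
    (Finset.mem_univ i)
  have h1 : p j ≤ 1 := by
    rw [← hp.1.2]
    exact Finset.single_le_sum (fun k _ => hp.1.1 k) (Finset.mem_univ j)
  have h2 := Real.log_nonpos (hp.2 j).le h1
  nlinarith [hα j]

lemma bddAbove_image_level {n : ℕ} {α : Fin n → ℝ} (hα : ∀ i, 0 < α i) {D : (Fin n → ℝ) → ℝ}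
    (hD : ContinuousOn D (posSimplex n)) (μ : ℝ) :
    BddAbove (D '' {p ∈ posSimplex n | (-∑ j, α j * Real.log (p j)) = μ}) := by
  -- On the level set `-α i * log (p i) ≤ μ`, which keeps `p i` away from zero.
  have hK : IsCompact (stdSimplex ℝ (Fin n) ∩ {p | ∀ i, Real.exp (-μ / α i) ≤ p i}) := by
    refine (isCompact_stdSimplex ℝ (Fin n)).inter_right ?_
    simp only [Set.ofPred_forall]
    exact isClosed_iInter fun i => isClosed_le continuous_const (continuous_apply i)
  have hsub : stdSimplex ℝ (Fin n) ∩ {p | ∀ i, Real.exp (-μ / α i) ≤ p i} ⊆ posSimplex n :=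
    fun p hp => ⟨hp.1, fun i => (Real.exp_pos _).trans_le (hp.2 i)⟩
  refine (hK.bddAbove_image (hD.mono hsub)).mono (Set.image_mono ?_)
  rintro p ⟨hp, hL⟩
  refine ⟨hp.1, fun i => ?_⟩
  have h := single_le_loss hα hp i
  rw [hL] at h
  rw [← Real.le_log_iff_exp_le (hp.2 i), div_le_iff₀ (hα i)]
  linarith

/-- Moving mass from coordinate `i` to coordinate `j` raises the loss from below `μ` to exactly `μ`
before coordinate `i` is exhausted, since the loss tends to infinity there. -/
lemma exists_level_on_segment {n : ℕ} {α p : Fin n → ℝ} (hα : ∀ i, 0 < α i)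
    (hp : p ∈ posSimplex n) {μ : ℝ} (hL : (-∑ j, α j * Real.log (p j)) < μ)
    {i j : Fin n} (hij : i ≠ j) :
    ∃ t : ℝ, 0 < t ∧ p + t • (Pi.single j 1 - Pi.single i 1) ∈ posSimplex n ∧
      (-∑ k, α k * Real.log ((p + t • (Pi.single j 1 - Pi.single i 1) : Fin n → ℝ) k)) = μ := by
  set q : ℝ → Fin n → ℝ := fun t => p + t • (Pi.single j 1 - Pi.single i 1) with hq
  have hqi : ∀ t, q t i = p i - t := fun t => by simp [hq, hij, sub_eq_add_neg]
  have hqS : ∀ t, 0 ≤ t → t < p i → q t ∈ posSimplex n := by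
    intro t ht hti
    have hpos : ∀ k, 0 < q t k := by
      intro k
      rcases eq_or_ne k i with rfl | hk
      · rw [hqi]; linarith
      · have h0 := hp.2 k
        rcases eq_or_ne k j with rfl | hkj
        · simp [hq, hk]; linarith
        · simpa [hq, hk, hkj] using h0
    refine ⟨⟨fun k => (hpos k).le, ?_⟩, hpos⟩
    have := hp.1.2
    simp [hq, Finset.sum_add_distrib, ← Finset.mul_sum, this]
  -- At `q i = ε` the `i`-th summand of the loss alone is at least `μ`.
  set ε := min (p i) (Real.exp (-μ / α i)) with hε
  have hε0 : 0 < ε := lt_min (hp.2 i) (Real.exp_pos _)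
  have hεp : ε ≤ p i := min_le_left _ _
  have hcont : ContinuousOn (fun t => -∑ k, α k * Real.log (q t k)) (Set.Icc 0 (p i - ε)) := by
    refine (continuousOn_finsetSum _ fun k _ => continuousOn_const.mul ?_).neg
    refine ContinuousOn.log ?_ fun t ht => ((hqS t ht.1 (by linarith [ht.2])).2 k).ne'
    have : Continuous fun t => q t k := by
      simp only [hq, Pi.add_apply, Pi.smul_apply, smul_eq_mul]
      fun_prop
    exact this.continuousOn
  have hend : μ ≤ -∑ k, α k * Real.log (q (p i - ε) k) := by
    refine le_trans ?_ (single_le_loss hα (hqS (p i - ε) (by linarith) (by linarith)) i)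
    have h : Real.log ε ≤ -μ / α i := by
      rw [Real.log_le_iff_le_exp hε0]
      exact min_le_right _ _
    rw [le_div_iff₀ (hα i)] at h
    rw [hqi, sub_sub_cancel]
    linarith
  have hq0 : q 0 = p := by simp [hq]
  obtain ⟨t, ht, hLt⟩ := intermediate_value_Icc (by linarith) hcont
    ⟨by simpa only [hq0] using hL.le, hend⟩
  refine ⟨t, lt_of_le_of_ne ht.1 ?_, hqS t ht.1 (by linarith [ht.2]), hLt⟩
  rintro rfl
  simp only [hq0] at hLt
  exact hL.ne hLt

/-- Third case of the paper's Theorem 2.4 (upper confidence bound): when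
`Δ(α) < μ`, any global minimizer `p*` satisfies `C(p*) ≤ G(M)` where `M` is
the supremum of `D` over the level set `{L_α = μ}`. -/
theorem mowst_case_mlp_wins_conf_upper (n : ℕ) (hn : 2 ≤ n)
    (u : Fin n → ℝ) (hu : u = fun _ => (1 : ℝ) / n)
    (α : Fin n → ℝ) (hα : α ∈ posSimplex n) (hαu : α ≠ u)
    (D : (Fin n → ℝ) → ℝ) (G : ℝ → ℝ)
    (hDcont : ContinuousOn D (posSimplex n))
    (hDqc : ∀ p ∈ posSimplex n, ∀ q ∈ posSimplex n, ∀ l ∈ Set.Icc (0 : ℝ) 1,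
      D (l • p + (1 - l) • q) ≤ max (D p) (D q))
    (hDu : D u = 0)
    (hDpos : ∀ p ∈ posSimplex n, p ≠ u → 0 < D p)
    (hG : Monotone G) (hG0 : G 0 = 0)
    (hGpos : ∀ x : ℝ, 0 < x → 0 < G x ∧ G x ≤ 1)
    (μ : ℝ) (hμ : (-∑ j, α j * Real.log (α j)) < μ)
    (f : (Fin n → ℝ) → ℝ)
    (hf : ∀ p, f p = G (D p) * ((-∑ j, α j * Real.log (p j)) - μ))
    (pstar : Fin n → ℝ) (hpstar : pstar ∈ posSimplex n)
    (hmin : ∀ q ∈ posSimplex n, f pstar ≤ f q) :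
    G (D pstar) ≤
      G (sSup (D '' {p ∈ posSimplex n | (-∑ j, α j * Real.log (p j)) = μ})) := by
  have hLstar : (-∑ j, α j * Real.log (pstar j)) < μ := by
    have h1 := hmin α hα
    rw [hf, hf] at h1
    have h2 := (hGpos _ (hDpos α hα hαu)).1
    have h3 : 0 ≤ G (D pstar) := by
      rcases eq_or_ne pstar u with h | h
      · rw [h, hDu, hG0]
      · exact (hGpos _ (hDpos _ hpstar h)).1.le
    by_contra! h4
    have h5 := mul_nonneg h3 (sub_nonneg.2 h4)
    have h6 := mul_neg_of_pos_of_neg h2 (sub_neg.2 hμ)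
    linarith
  have hij : (⟨0, by omega⟩ : Fin n) ≠ ⟨1, by omega⟩ := by simp
  obtain ⟨t, ht, htS, htL⟩ := exists_level_on_segment hα.2 hpstar hLstar hij
  obtain ⟨s, hs, hsS, hsL⟩ := exists_level_on_segment hα.2 hpstar hLstar hij.symm
  have hbdd := bddAbove_image_level hα.2 hDcont μ
  apply hG
  -- The weights `s / (s + t)` and `t / (s + t)` cancel the displacements `t` and `-s`.
  have hqc := hDqc _ htS _ hsS (s / (s + t))
    ⟨by positivity, (div_le_one (by positivity)).2 (by linarith)⟩
  have hcomb : ∀ a b : Fin n → ℝ,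
      (s / (s + t)) • (pstar + t • (a - b)) + (1 - s / (s + t)) • (pstar + s • (b - a))
        = pstar := by
    intro a b
    ext k
    simp only [Pi.add_apply, Pi.smul_apply, Pi.sub_apply, smul_eq_mul]
    field_simp
    ring
  rw [hcomb] at hqc
  exact hqc.trans (max_le (le_csSup hbdd ⟨_, ⟨htS, htL⟩, rfl⟩)
    (le_csSup hbdd ⟨_, ⟨hsS, hsL⟩, rfl⟩))
end
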